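/- arXiv:1907.04997 — 2 statements merged into one kernel-verified Lean document; each statement's English description precedes it below -/
import Mathlib

section
/- Let n ≥ 1 be an integer, let τ > 0 be a real number, and let f : ℝ → ℝ satisfy: f(t) > 0 for all t ∈ [0, τ), f(τ) ≥ 0, the function t ↦ f(t)^{1/n} is concave on the interval [0, τ], and f is differentiable at every point of (0, τ). If x ∈ (0, τ) and f'(x) < 0, then τ ≤ x + n·f(x)/(−f'(x)). -/
/-!
The graph of the concave function `f ^ (1 / n)` lies below its tangent line at `x`. This line has
negative slope and is nonnegative at `τ`, since `f ^ (1 / n)` is; hence its zero, the Newton iterate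
`x - n * f x / f' x` of `f ^ (1 / n)`, is at least `τ`.
-/

section

variable {S : Set ℝ} {f : ℝ → ℝ} {f' x y : ℝ}

theorem concaveOn_le_tangentLine (hf : ConcaveOn ℝ S f) (hx : x ∈ S) (hy : y ∈ S)
    (hf' : HasDerivWithinAt f f' S x) : f y ≤ f x + f' * (y - x) := by
  rcases lt_trichotomy x y with hxy | rfl | hyx
  · have hslope := hf.slope_le_of_hasDerivWithinAt hx hy hxy hf'
    rw [slope_def_field, div_le_iff₀ (sub_pos.2 hxy)] at hslope
    linarith
  · simp
  · have hslope := hf.le_slope_of_hasDerivWithinAt hy hx hyx hf'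
    rw [slope_def_field, le_div_iff₀ (sub_pos.2 hyx)] at hslope
    linarith

theorem add_mul_sub_nonneg_of_concaveOn_rpow {p : ℝ} (hf : ConcaveOn ℝ S fun t ↦ f t ^ p)
    (hx : x ∈ S) (hy : y ∈ S) (hfx : 0 < f x) (hfy : 0 ≤ f y)
    (hf' : HasDerivWithinAt f f' S x) : 0 ≤ f x + p * f' * (y - x) := by
  have hderiv : HasDerivWithinAt (fun t ↦ f t ^ p) (f' * p * f x ^ (p - 1)) S x :=
    hf'.rpow_const (Or.inl hfx.ne')
  have htangent : 0 ≤ f x ^ (p - 1) * (f x + p * f' * (y - x)) :=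
    calc
      0 ≤ f y ^ p := Real.rpow_nonneg hfy p
      _ ≤ f x ^ p + f' * p * f x ^ (p - 1) * (y - x) :=
        concaveOn_le_tangentLine hf hx hy hderiv
      _ = f x ^ (p - 1) * (f x + p * f' * (y - x)) := by
        rw [Real.rpow_sub_one hfx.ne']
        field_simp
  exact nonneg_of_mul_nonneg_right htangent (Real.rpow_pos_of_pos hfx _)

theorem stmt_1_general {r : ℝ} (hr : 0 < r) (hf : ConcaveOn ℝ S fun t ↦ f t ^ (1 / r))
    (hx : x ∈ S) (hy : y ∈ S) (hfx : 0 < f x) (hfy : 0 ≤ f y)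
    (hf' : HasDerivWithinAt f f' S x) (hneg : f' < 0) : y ≤ x + r * f x / (-f') := by
  have htangent : 0 ≤ f x + 1 / r * f' * (y - x) :=
    add_mul_sub_nonneg_of_concaveOn_rpow hf hx hy hfx hfy hf'
  have hscaled : 0 ≤ r * f x + f' * (y - x) :=
    calc
      0 ≤ r * (f x + 1 / r * f' * (y - x)) := mul_nonneg hr.le htangent
      _ = r * f x + f' * (y - x) := by field_simp
  have hstep : y - x ≤ r * f x / (-f') := by
    rw [le_div_iff₀ (neg_pos.2 hneg)]
    linarith
  linarith

end

theorem stmt_1 (n : ℕ) (hn : 1 ≤ n) (τ : ℝ) (hτ : 0 < τ) (f : ℝ → ℝ)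
    (hpos : ∀ t ∈ Set.Ico (0:ℝ) τ, 0 < f t)
    (hτ0 : 0 ≤ f τ)
    (hconc : ConcaveOn ℝ (Set.Icc 0 τ) (fun t => f t ^ ((1:ℝ) / n)))
    (hdiff : ∀ t ∈ Set.Ioo (0:ℝ) τ, DifferentiableAt ℝ f t)
    (x : ℝ) (hx : x ∈ Set.Ioo (0:ℝ) τ) (hx' : deriv f x < 0) :
    τ ≤ x + n * f x / (-(deriv f x)) :=
  stmt_1_general (Nat.cast_pos.2 hn) hconc (Set.Ioo_subset_Icc_self hx) (Set.right_mem_Icc.2 hτ.le)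
    (hpos x (Set.Ioo_subset_Ico_self hx)) hτ0 (hdiff x hx).hasDerivAt.hasDerivWithinAt hx'
end

section
/- Let V, f₀, A, ε, τ, c₀ be real numbers with V > 0, f₀ > 0, A > 0, 0 < ε < τ, and suppose that V − ε²/f₀ = c₀·(τ − ε)² and ε/f₀ = c₀·(τ − ε). Then ε·τ = f₀·V, and 1 − ( ∫₀^ε (V − x²/f₀) dx + ∫_ε^τ c₀·(τ − x)² dx ) / (A·V) = 1 − (ε + τ)/(3A). -/
/-!
The argument works for any exponent: take the profile `V - x ^ (n + 1) / f` on `[0, ε]` and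
`c * (τ - x) ^ (n + 1)` on `[ε, τ]`. Equality of the slopes at `ε`, after cancelling the factor
`-(n + 1)`, is `ε ^ n / f = c * (τ - ε) ^ n`. It eliminates `c` from every higher power
`c * (τ - ε) ^ (n + k)`: for `k = 1` the equality of values becomes `V = ε ^ n * τ / f`, and for
`k = 2` the area under the profile becomes `V * (τ + n * ε) / (n + 2)`.
-/

section Matching

variable {K : Type*} [Field K] {V f c ε τ : K} {n : ℕ}

theorem mul_sub_pow_add_of_slope_eq (hslope : ε ^ n / f = c * (τ - ε) ^ n) (k : ℕ) :
    c * (τ - ε) ^ (n + k) = ε ^ n / f * (τ - ε) ^ k := by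
  rw [hslope, pow_add, mul_assoc]

theorem pow_mul_eq_of_value_eq_of_slope_eq (hf : f ≠ 0)
    (hvalue : V - ε ^ (n + 1) / f = c * (τ - ε) ^ (n + 1))
    (hslope : ε ^ n / f = c * (τ - ε) ^ n) :
    ε ^ n * τ = f * V := by
  rw [mul_sub_pow_add_of_slope_eq hslope] at hvalue
  have hV : V = ε ^ n * τ / f := by linear_combination hvalue
  rw [hV, mul_div_cancel₀ _ hf]

end Matching

theorem integral_const_sub_pow_div (V f a b : ℝ) (n : ℕ) :
    ∫ x in a..b, (V - x ^ n / f) =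
      V * (b - a) - (b ^ (n + 1) - a ^ (n + 1)) / (n + 1) / f := by
  rw [intervalIntegral.integral_sub (Continuous.intervalIntegrable (by fun_prop) _ _)
      (Continuous.intervalIntegrable (by fun_prop) _ _),
    intervalIntegral.integral_const, intervalIntegral.integral_div, integral_pow,
    smul_eq_mul, mul_comm]

theorem integral_const_mul_sub_pow (c τ a b : ℝ) (n : ℕ) :
    ∫ x in a..b, c * (τ - x) ^ n =
      c * (((τ - a) ^ (n + 1) - (τ - b) ^ (n + 1)) / (n + 1)) := by
  rw [intervalIntegral.integral_const_mul,
    intervalIntegral.integral_comp_sub_left (fun x ↦ x ^ n) τ, integral_pow]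

theorem integral_add_integral_of_value_eq_of_slope_eq {V f c ε τ : ℝ} {n : ℕ} (hf : f ≠ 0)
    (hvalue : V - ε ^ (n + 1) / f = c * (τ - ε) ^ (n + 1))
    (hslope : ε ^ n / f = c * (τ - ε) ^ n) :
    (∫ x in (0 : ℝ)..ε, (V - x ^ (n + 1) / f)) + ∫ x in ε..τ, c * (τ - x) ^ (n + 1) =
      V * ((τ + n * ε) / (n + 2)) := by
  have hV : V = ε ^ n * τ / f :=
    (eq_div_iff hf).2 (by rw [pow_mul_eq_of_value_eq_of_slope_eq hf hvalue hslope, mul_comm])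
  have hn : (n : ℝ) + 2 ≠ 0 := by positivity
  calc
    _ = V * ε - ε ^ (n + 2) / (n + 2) / f + c * (τ - ε) ^ (n + 2) / (n + 2) := by
      rw [integral_const_sub_pow_div, integral_const_mul_sub_pow]
      push_cast
      ring
    _ = ε ^ n * τ / f * ε - ε ^ (n + 2) / (n + 2) / f
          + ε ^ n / f * (τ - ε) ^ 2 / (n + 2) := by
      rw [mul_sub_pow_add_of_slope_eq hslope, hV]
    _ = ε ^ n * τ / f * ((τ + n * ε) / (n + 2)) := by
      field_simp
      ring
    _ = V * ((τ + n * ε) / (n + 2)) := by rw [hV]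

theorem stmt_2_general (n : ℕ) (V f A ε τ c : ℝ) (hV : V ≠ 0) (hf : f ≠ 0) (hA : A ≠ 0)
    (hvalue : V - ε ^ (n + 1) / f = c * (τ - ε) ^ (n + 1))
    (hslope : ε ^ n / f = c * (τ - ε) ^ n) :
    ε ^ n * τ = f * V ∧
      1 - ((∫ x in (0 : ℝ)..ε, (V - x ^ (n + 1) / f))
          + ∫ x in ε..τ, c * (τ - x) ^ (n + 1)) / (A * V)
        = 1 - (τ + n * ε) / ((n + 2) * A) := by
  refine ⟨pow_mul_eq_of_value_eq_of_slope_eq hf hvalue hslope, ?_⟩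
  rw [integral_add_integral_of_value_eq_of_slope_eq hf hvalue hslope]
  field_simp

theorem stmt_2 (V f₀ A ε τ c₀ : ℝ) (hV : 0 < V) (hf₀ : 0 < f₀) (hA : 0 < A)
    (hε : 0 < ε) (hετ : ε < τ)
    (h1 : V - ε ^ 2 / f₀ = c₀ * (τ - ε) ^ 2)
    (h2 : ε / f₀ = c₀ * (τ - ε)) :
    ε * τ = f₀ * V ∧
      1 - ((∫ x in (0:ℝ)..ε, (V - x ^ 2 / f₀)) + ∫ x in ε..τ, c₀ * (τ - x) ^ 2) / (A * V)
        = 1 - (ε + τ) / (3 * A) := by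
  have three : (1 : ℝ) + 2 = 3 := by norm_num
  simpa only [pow_one, Nat.reduceAdd, Nat.cast_one, one_mul, three, add_comm τ ε] using
    stmt_2_general 1 V f₀ A ε τ c₀ hV.ne' hf₀.ne' hA.ne' h1 (by simpa only [pow_one])
end
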